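/- arXiv:2604.27698 — 2 statements merged into one kernel-verified Lean document; each statement's English description precedes it below -/
import Mathlib

section
/- Let k ≥ 2 be an integer. For s ∈ ℂ with Re(s) > 0 and s ∉ {1, 1/k}, the series ∑_{n=1}^∞ [σ_{k−1−ks}^{(k−1)}(n)/n²] ∫_1^∞ cos(2πnx) x^{−s−2} dx converges absolutely, the function G(s) := (1/2)ζ(ks) + ζ(ks − (k−1))/(s−1) + (s/12)ζ(ks + k − 1) − (s(s+1)/(2π²)) ∑_{n=1}^∞ [σ_{k−1−ks}^{(k−1)}(n)/n²] ∫_1^∞ cos(2πnx) x^{−s−2} dx is analytic on {s : Re(s) > 0} ∖ {1, 1/k}, and G(s) = ∑_{j=1}^∞ d^{(1/k)}(j) j^{−s} whenever Re(s) > 1. -/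
/-!
For `Re s > 1` the Dirichlet series of Wigert's function is
`∑_d d^{-s} ∑_{m ≥ d^{k-1}} m^{-s}`, because `d^k ≤ dm` means `d^{k-1} ≤ m` (`hasSum_wigert`).
The second-order Euler–Maclaurin formula (`euler_maclaurin_tail`) expresses the inner tail, with
`N = d^{k-1}`, through the boundary terms `N^{1-s}/(s-1) + N^{-s}/2 + (s/12) N^{-s-1}` and the
integral of `B₂({x}) x^{-s-2}` over `(N, ∞)`. Summed over `d`, the boundary terms give the three
zeta values (`hasSum_emTerm`).

In the remainder one inserts `B₂({x}) = π^{-2} ∑ cos(2πmx)/m²`, integrates termwise and rescales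
by `N` (`integral_cosSeries`). This gives a double series over `(d, m)` with general term
`d^{-(ks+k-1)} m^{-2} ∫_1^∞ cos(2π m d^{k-1} x) x^{-s-2} dx`; collecting the pairs with
`m d^{k-1} = n` (`hasSum_reindex`, `sigma_term_eq`) produces `σ_{k-1-ks}^{(k-1)}(n)/n²`.

The integrals are bounded by `1` for `Re s > 0`, so on `Re s ≥ ε > 0` the double series is
dominated by `∑ d^{-(kε+k-1)} m^{-2}`, which converges because `k ≥ 2`. This gives absolute
convergence and, by the Weierstrass theorem, holomorphy on `Re s > 0`
(`differentiableOn_series`); the zeta factors have poles there only at `s = 1` and `s = 1/k`.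
-/

noncomputable section

/-- Wigert's divisor function `d^{(1/k)}(n) = #{d : d ∣ n, d^k ≤ n}`. -/
def wigertD (k n : ℕ) : ℕ := (n.divisors.filter fun d => d ^ k ≤ n).card

/-- The generalized divisor function `σ_z^{(k)}(n) = ∑_{d ≥ 1, d^k ∣ n} d^z`. -/
def sigmaK (k : ℕ) (z : ℂ) (n : ℕ) : ℂ :=
  ∑ d ∈ n.divisors.filter (fun d => d ^ k ∣ n), (d : ℂ) ^ z

open MeasureTheory

/-! ### The oscillating integrals -/

/-- The integral `∫_1^∞ cos(2πnx) x^{-s-2} dx`. -/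
def cosInt (n : ℕ) (s : ℂ) : ℂ :=
  ∫ x in Set.Ioi (1 : ℝ), (Real.cos (2 * Real.pi * n * x) : ℂ) * (x : ℂ) ^ (-s - 2)

/-! ### Rearrangement of sums over divisors and the zeta series -/

lemma hasSum_of_forall_eq {ι : Type*} {f g : ι → ℂ} {a : ℂ} (hg : HasSum g a)
    (h : ∀ i, f i = g i) : HasSum f a :=
  (funext h : f = g) ▸ hg

/-- The finite divisor sum written as a sum over all `d : ℕ+`; a `d` with `d ^ q ∣ n` divides `n`
because `q ≠ 0`. -/
lemma hasSum_divisors_filter {E : Type*} [NormedAddCommGroup E] (q : ℕ) (hq : q ≠ 0) (n : ℕ+)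
    (f : ℕ → E) :
    HasSum (fun d : ℕ+ => if (d : ℕ) ^ q ∣ (n : ℕ) then f d else 0)
      (∑ d ∈ (n : ℕ).divisors.filter (fun d => d ^ q ∣ (n : ℕ)), f d) := by
  have h0 : ∀ d : ℕ, d ∉ Set.range ((↑) : ℕ+ → ℕ) →
      (if d ^ q ∣ (n : ℕ) then f d else 0) = 0 := by
    intro d hd
    have hd0 : d = 0 := by
      by_contra h
      exact hd ⟨⟨d, Nat.pos_of_ne_zero h⟩, rfl⟩
    subst hd0
    simp [zero_pow hq]
  refine (PNat.coe_injective.hasSum_iff (f := fun d : ℕ => if d ^ q ∣ (n : ℕ) then f d else 0)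
    h0).2 ?_
  rw [Finset.sum_filter]
  refine hasSum_sum_of_ne_finset_zero fun d hd => ?_
  rw [if_neg]
  intro h
  exact hd (Nat.mem_divisors.2 ⟨(dvd_pow_self d hq).trans h, n.ne_zero⟩)

/-- Summing a double series over pairs `(d, m)` by the value `n = m d^q`, through the injection
`(d, m) ↦ (m d^q, d)`. -/
lemma hasSum_reindex {E : Type*} [NormedAddCommGroup E] (q : ℕ) (hq : q ≠ 0)
    (F : ℕ → ℕ → E) {S : E} (hF : HasSum (fun p : ℕ+ × ℕ+ => F p.1 p.2) S) :
    HasSum (fun n : ℕ+ => ∑ d ∈ (n : ℕ).divisors.filter (fun d => d ^ q ∣ (n : ℕ)),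
      F d ((n : ℕ) / d ^ q)) S := by
  set G : ℕ+ × ℕ+ → E := fun p =>
    if (p.2 : ℕ) ^ q ∣ (p.1 : ℕ) then F p.2 ((p.1 : ℕ) / (p.2 : ℕ) ^ q) else 0 with hG
  let e : ℕ+ × ℕ+ → ℕ+ × ℕ+ := fun p => (p.2 * p.1 ^ q, p.1)
  have he : Function.Injective e := by
    rintro ⟨d, m⟩ ⟨d', m'⟩ h
    simp only [e, Prod.mk.injEq] at h
    obtain ⟨h1, rfl⟩ := h
    rw [mul_right_cancel h1]
  have hGe : G ∘ e = fun p : ℕ+ × ℕ+ => F p.1 p.2 := by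
    funext p
    have : 0 < (p.1 : ℕ) ^ q := pow_pos p.1.pos q
    simp [hG, e, Nat.mul_div_cancel _ this]
  have h1 : HasSum G S := by
    refine (he.hasSum_iff ?_).1 (hGe ▸ hF)
    rintro ⟨n, d⟩ hx
    simp only [hG]
    rw [if_neg]
    rintro ⟨c, hc⟩
    have hc0 : 0 < c := Nat.pos_of_ne_zero (by rintro rfl; simp at hc)
    refine hx ⟨(d, ⟨c, hc0⟩), ?_⟩
    simp only [e, Prod.mk.injEq, and_true]
    apply PNat.eq
    rw [hc, mul_comm]
    rfl
  exact h1.prod_fiberwise fun n => hasSum_divisors_filter q hq n _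

lemma hasSum_zeta_pnat {w : ℂ} (hw : 1 < w.re) :
    HasSum (fun d : ℕ+ => ((d : ℕ) : ℂ) ^ (-w)) (riemannZeta w) := by
  have hs := (Complex.summable_one_div_nat_cpow (p := w)).2 hw
  have h := hs.hasSum
  rw [← zeta_eq_tsum_one_div_nat_cpow hw] at h
  have := (PNat.coe_injective.hasSum_iff (f := fun d : ℕ => 1 / (d : ℂ) ^ w) ?_).2 h
  · refine hasSum_of_forall_eq this fun d => ?_
    simp [Complex.cpow_neg]
  · intro d hd
    have hd0 : d = 0 := by
      by_contra h
      exact hd ⟨⟨d, Nat.pos_of_ne_zero h⟩, rfl⟩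
    have hw0 : w ≠ 0 := by rintro rfl; norm_num at hw
    simp [hd0, hw0]

/-! ### Size and holomorphy of the oscillating integrals -/

lemma norm_integrand_le (n : ℕ) (s : ℂ) {x : ℝ} (hx : 0 < x) :
    ‖(Real.cos (2 * Real.pi * n * x) : ℂ) * (x : ℂ) ^ (-s - 2)‖ ≤ x ^ (-s.re - 2) := by
  rw [norm_mul, Complex.norm_cpow_eq_rpow_re_of_pos hx, Complex.norm_real]
  have : ‖Real.cos (2 * Real.pi * n * x)‖ ≤ 1 := Real.abs_cos_le_one _
  have h2 : (-s - 2).re = -s.re - 2 := by simp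
  rw [h2]
  exact mul_le_of_le_one_left (Real.rpow_nonneg hx.le _) this

lemma norm_cosInt_le (n : ℕ) {s : ℂ} (hs : 0 < s.re) : ‖cosInt n s‖ ≤ 1 := by
  have h1 : IntegrableOn (fun x : ℝ => x ^ (-s.re - 2)) (Set.Ioi 1) :=
    integrableOn_Ioi_rpow_of_lt (by linarith) one_pos
  refine (norm_integral_le_of_norm_le h1 ?_).trans ?_
  · filter_upwards [ae_restrict_mem measurableSet_Ioi] with x hx
    exact norm_integrand_le n s (one_pos.trans hx)
  · rw [integral_Ioi_rpow_of_lt (by linarith) one_pos, Real.one_rpow]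
    rw [neg_div, ← div_neg, div_le_one] <;> linarith

/-- `cosInt n s` is the Mellin transform, at `-s - 1`, of the cosine cut off to `(1, ∞)`, and is
therefore holomorphic. -/
lemma differentiableAt_cosInt (n : ℕ) {s : ℂ} (hs : 0 < s.re) :
    DifferentiableAt ℂ (cosInt n) s := by
  set f : ℝ → ℂ := (Set.Ioi (1 : ℝ)).indicator
    fun x => (Real.cos (2 * Real.pi * n * x) : ℂ) with hf
  have hfb : ∀ x, ‖f x‖ ≤ 1 := by
    intro x
    refine (norm_indicator_le_norm_self _ _).trans ?_
    rw [Complex.norm_real]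
    exact Real.abs_cos_le_one _
  have hcont : Continuous fun x : ℝ => (Real.cos (2 * Real.pi * n * x) : ℂ) := by fun_prop
  have hli : LocallyIntegrableOn f (Set.Ioi 0) volume :=
    (((hcont.locallyIntegrable).indicator measurableSet_Ioi)).locallyIntegrableOn _
  have hE : cosInt n = fun s => mellin f (-s - 1) := by
    funext s
    have : ∀ t : ℝ, (t : ℂ) ^ (-s - 1 - 1) • f t = (Set.Ioi (1 : ℝ)).indicator
        (fun x => (Real.cos (2 * Real.pi * n * x) : ℂ) * (x : ℂ) ^ (-s - 2)) t := by
      intro t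
      by_cases ht : t ∈ Set.Ioi (1 : ℝ)
      · simp only [hf, Set.indicator_of_mem ht, smul_eq_mul]
        rw [mul_comm]; ring_nf
      · simp [hf, Set.indicator_of_notMem ht]
    simp only [mellin, this]
    rw [setIntegral_indicator measurableSet_Ioi, cosInt]
    congr 2
    simp
  rw [hE]
  refine DifferentiableAt.comp (g := mellin f) s ?_ (by fun_prop)
  -- `f` vanishes near `0`, so any exponent `b` below `Re (-s - 1)` is admissible.
  refine mellin_differentiableAt_of_isBigO_rpow (a := 0) (b := -s.re - 2) hli ?_ ?_ ?_ ?_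
  · refine Asymptotics.IsBigO.of_bound 1 (Filter.Eventually.of_forall fun x => ?_)
    simpa using hfb x
  · simp; linarith
  · refine Asymptotics.IsBigO.of_bound 1 ?_
    filter_upwards [Ioo_mem_nhdsGT one_pos] with x hx
    rw [hf, Set.indicator_of_notMem (by simpa using hx.2.le)]
    simp
  · simp

/-! ### The periodic Bernoulli polynomial and Euler–Maclaurin summation -/

/-- The Fourier series `∑ cos(2πnx) / n²`; the term `n = 0` is the junk value `0`. -/
def cosSeries (x : ℝ) : ℝ := ∑' n : ℕ, 1 / (n : ℝ) ^ 2 * Real.cos (2 * Real.pi * n * x)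

lemma norm_cosSeries_term_le (n : ℕ) (x : ℝ) :
    ‖1 / (n : ℝ) ^ 2 * Real.cos (2 * Real.pi * n * x)‖ ≤ 1 / (n : ℝ) ^ 2 := by
  rw [norm_mul, Real.norm_of_nonneg (by positivity)]
  exact mul_le_of_le_one_right (by positivity) (Real.abs_cos_le_one _)

lemma summable_inv_sq : Summable fun n : ℕ => 1 / (n : ℝ) ^ 2 :=
  Real.summable_one_div_nat_pow.2 one_lt_two

lemma continuous_cosSeries : Continuous cosSeries :=
  continuous_tsum (fun n => by fun_prop) summable_inv_sq norm_cosSeries_term_le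

lemma norm_cosSeries_le (x : ℝ) : ‖cosSeries x‖ ≤ ∑' n : ℕ, 1 / (n : ℝ) ^ 2 :=
  tsum_of_norm_bounded summable_inv_sq.hasSum fun n => norm_cosSeries_term_le n x

/-- `cosSeries x = π² B₂(x - m)` on `[m, m + 1]`, with `B₂` the second Bernoulli polynomial. -/
lemma cosSeries_eq (m : ℕ) {x : ℝ} (hx : x ∈ Set.Icc (m : ℝ) (m + 1)) :
    cosSeries x = Real.pi ^ 2 * ((x - m) ^ 2 - (x - m) + 1 / 6) := by
  have h := (hasSum_one_div_nat_pow_mul_cos (k := 1) one_ne_zero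
    (x := x - m) ⟨by linarith [hx.1], by linarith [hx.2]⟩).tsum_eq
  have hB : Polynomial.eval (x - m) (Polynomial.map (algebraMap ℚ ℝ) (Polynomial.bernoulli 2))
      = (x - m) ^ 2 - (x - m) + 1 / 6 := by
    simp [Polynomial.bernoulli, Finset.sum_range_succ, Polynomial.eval_monomial]
    ring
  have hc : ∀ n : ℕ, Real.cos (2 * Real.pi * n * (x - m)) = Real.cos (2 * Real.pi * n * x) := by
    intro n
    have := Real.cos_sub_nat_mul_two_pi (2 * Real.pi * n * x) (n * m)
    rw [← this]
    congr 1
    push_cast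
    ring
  rw [mul_one, hB] at h
  simp only [hc] at h
  rw [cosSeries, h]
  rw [Nat.factorial_two]
  push_cast
  ring

/-- The boundary term `m^{1-s}/(s-1) + m^{-s}/2 + (s/12) m^{-s-1}` of the second-order
Euler–Maclaurin formula for `∑_{j ≥ m} j^{-s}`. -/
def emTerm (s : ℂ) (m : ℕ) : ℂ :=
  s / 12 * (m : ℂ) ^ (-s - 1) + (m : ℂ) ^ (1 - s) / (s - 1) + 1 / 2 * (m : ℂ) ^ (-s)

lemma integrableOn_cosSeries {s : ℂ} (hs : 0 < s.re) {N : ℝ} (hN : 0 < N) :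
    IntegrableOn (fun x : ℝ => (cosSeries x : ℂ) * (x : ℂ) ^ (-s - 2)) (Set.Ioi N) := by
  refine Integrable.bdd_mul (c := ∑' n : ℕ, 1 / (n : ℝ) ^ 2)
    (integrableOn_Ioi_cpow_of_lt (by simp; linarith) hN) ?_ ?_
  · exact (Complex.continuous_ofReal.comp continuous_cosSeries).aestronglyMeasurable
  · refine Filter.Eventually.of_forall fun x => ?_
    rw [Complex.norm_real]
    exact norm_cosSeries_le x

/-- Euler–Maclaurin on `[m, m + 1]`: two integrations by parts, carried out by exhibiting a
primitive. -/
lemma integral_unit_interval {s : ℂ} (hs : 1 < s.re) {m : ℕ} (hm : 0 < m) :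
    s * (s + 1) / (2 * (Real.pi : ℂ) ^ 2) *
      ∫ x in (m : ℝ)..((m + 1 : ℕ) : ℝ), (cosSeries x : ℂ) * (x : ℂ) ^ (-s - 2)
      = emTerm s m - emTerm s (m + 1) - (m : ℂ) ^ (-s) := by
  have hpi : (Real.pi : ℂ) ≠ 0 := by exact_mod_cast Real.pi_ne_zero
  have hs1 : s - 1 ≠ 0 := by
    intro h
    rw [sub_eq_zero.1 h] at hs
    simp at hs
  have hs1' : 1 - s ≠ 0 := fun h => hs1 (by linear_combination -h)
  have hs0 : s ≠ 0 := by rintro rfl; norm_num at hs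
  have hs2 : -s - 1 ≠ 0 := by
    intro h
    have := congrArg Complex.re h
    simp at this
    linarith
  have hm0 : (0 : ℝ) < m := by exact_mod_cast hm
  have hle : (m : ℝ) ≤ ((m + 1 : ℕ) : ℝ) := by push_cast; linarith
  rw [← intervalIntegral.integral_const_mul]
  -- `H` is a primitive of `s (s + 1) / 2 * B x * x ^ (-s - 2)`, with `B` the polynomial `B₂(x - m)`.
  set B : ℝ → ℂ := fun x => ((x : ℂ) - m) ^ 2 - ((x : ℂ) - m) + 1 / 6 with hB
  set H : ℝ → ℂ := fun x => -(s / 2) * (B x * (x : ℂ) ^ (-s - 1))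
    - ((x : ℂ) - m - 1 / 2) * (x : ℂ) ^ (-s) + (x : ℂ) ^ (1 - s) / (1 - s) with hH
  have hcongr : ∫ x in (m : ℝ)..((m + 1 : ℕ) : ℝ), s * (s + 1) / (2 * (Real.pi : ℂ) ^ 2) *
      ((cosSeries x : ℂ) * (x : ℂ) ^ (-s - 2))
      = ∫ x in (m : ℝ)..((m + 1 : ℕ) : ℝ), s * (s + 1) / 2 * (B x * (x : ℂ) ^ (-s - 2)) := by
    refine intervalIntegral.integral_congr fun x hx => ?_
    rw [Set.uIcc_of_le hle] at hx
    simp only [hB]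
    rw [cosSeries_eq m (by simpa using hx)]
    push_cast
    field_simp
  rw [hcongr, intervalIntegral.integral_eq_sub_of_hasDerivAt (f := H)]
  · simp only [hH, hB, emTerm]
    push_cast
    simp only [sub_self, add_sub_cancel_left]
    field_simp
    ring
  · intro x hx
    rw [Set.uIcc_of_le hle] at hx
    have hx0 : x ≠ 0 := (hm0.trans_le hx.1).ne'
    have hxC : (x : ℂ) ≠ 0 := by exact_mod_cast hx0
    have d0 : HasDerivAt (fun x : ℝ => (x : ℂ) - m) 1 x :=
      (Complex.ofRealCLM.hasDerivAt).sub_const _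
    have d1 := hasDerivAt_ofReal_cpow_const hx0 hs2
    have d2 := hasDerivAt_ofReal_cpow_const hx0 (neg_ne_zero.2 hs0)
    have d3 := hasDerivAt_ofReal_cpow_const hx0 hs1'
    have dB : HasDerivAt B (2 * ((x : ℂ) - m) - 1) x := by
      have := ((d0.pow 2).sub d0).add_const (1 / 6 : ℂ)
      refine (show HasDerivAt B _ x from this).congr_deriv ?_
      simp
    have := (((dB.mul d1).const_mul (-(s / 2))).sub ((d0.sub_const (1 / 2)).mul d2)).add
      (d3.div_const (1 - s))
    refine (show HasDerivAt H _ x from this).congr_deriv ?_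
    have e1 : (-s - 1 - 1 : ℂ) = -s - 2 := by ring
    have e2 : (1 - s - 1 : ℂ) = -s := by ring
    rw [e1, e2]
    field_simp
    ring
  · refine ContinuousOn.intervalIntegrable ?_
    rw [Set.uIcc_of_le hle]
    intro x hx
    have hx0 : x ≠ 0 := (hm0.trans_le hx.1).ne'
    have c1 : ContinuousAt (fun x : ℝ => (x : ℂ) ^ (-s - 2)) x :=
      Complex.continuousAt_ofReal_cpow_const _ _ (Or.inr hx0)
    have c2 : Continuous B := by rw [hB]; fun_prop
    exact (continuousAt_const.mul (c2.continuousAt.mul c1)).continuousWithinAt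

lemma tendsto_natCast_cpow {w : ℂ} (hw : w.re < 0) :
    Filter.Tendsto (fun n : ℕ => (n : ℂ) ^ w) Filter.atTop (nhds 0) := by
  rw [tendsto_zero_iff_norm_tendsto_zero]
  have h := (tendsto_rpow_neg_atTop (y := -w.re) (by linarith)).comp
    (tendsto_natCast_atTop_atTop (R := ℝ))
  refine h.congr' ?_
  filter_upwards [Filter.eventually_gt_atTop 0] with n hn
  simp [Complex.norm_natCast_cpow_of_pos hn]

lemma tendsto_emTerm {s : ℂ} (hs : 1 < s.re) :
    Filter.Tendsto (emTerm s) Filter.atTop (nhds 0) := by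
  have h1 := tendsto_natCast_cpow (w := -s - 1) (by simp; linarith)
  have h2 := tendsto_natCast_cpow (w := 1 - s) (by simp; linarith)
  have h3 := tendsto_natCast_cpow (w := -s) (by simp; linarith)
  simpa using! ((h1.const_mul (s / 12)).add (h2.div_const (s - 1))).add (h3.const_mul (1 / 2))

lemma euler_maclaurin_tail {s : ℂ} (hs : 1 < s.re) {N : ℕ} (hN : 0 < N) :
    ∑' i : ℕ, ((N + i : ℕ) : ℂ) ^ (-s) = emTerm s N - s * (s + 1) / (2 * (Real.pi : ℂ) ^ 2) *
      ∫ x in Set.Ioi (N : ℝ), (cosSeries x : ℂ) * (x : ℂ) ^ (-s - 2) := by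
  have hN0 : (0 : ℝ) < N := by exact_mod_cast hN
  have hint := integrableOn_cosSeries (s := s) (by linarith) hN0
  have hb : Filter.Tendsto (fun M : ℕ => ((N + M : ℕ) : ℝ)) Filter.atTop Filter.atTop :=
    tendsto_natCast_atTop_atTop.comp (Filter.tendsto_add_atTop_nat N |>.congr fun M => add_comm _ _)
  have hlim := (intervalIntegral_tendsto_integral_Ioi (N : ℝ) hint hb).const_mul
    (s * (s + 1) / (2 * (Real.pi : ℂ) ^ 2))
  have hsum : Summable fun i : ℕ => ((N + i : ℕ) : ℂ) ^ (-s) := by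
    have := (summable_nat_add_iff N).2 ((Complex.summable_one_div_nat_cpow (p := s)).2 hs)
    refine this.congr fun i => ?_
    rw [Complex.cpow_neg, one_div, add_comm]
  have hpart : ∀ M : ℕ, s * (s + 1) / (2 * (Real.pi : ℂ) ^ 2) *
      ∫ x in (N : ℝ)..((N + M : ℕ) : ℝ), (cosSeries x : ℂ) * (x : ℂ) ^ (-s - 2)
      = emTerm s N - emTerm s (N + M) - ∑ i ∈ Finset.range M, ((N + i : ℕ) : ℂ) ^ (-s) := by
    intro M
    have hadj := intervalIntegral.sum_integral_adjacent_intervals (μ := volume)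
      (f := fun x : ℝ => (cosSeries x : ℂ) * (x : ℂ) ^ (-s - 2))
      (a := fun i : ℕ => ((N + i : ℕ) : ℝ)) (n := M) ?_
    · simp only [Nat.add_zero] at hadj
      rw [← hadj, Finset.mul_sum]
      have : ∀ i ∈ Finset.range M, _ := fun i _ =>
        integral_unit_interval hs (m := N + i) (by omega)
      simp only [← add_assoc]
      rw [Finset.sum_congr rfl this, Finset.sum_sub_distrib]
      congr 1
      exact Finset.sum_range_sub' (fun i => emTerm s (N + i)) M
    · intro i _
      rw [intervalIntegrable_iff_integrableOn_Ioc_of_le (by push_cast; linarith)]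
      refine hint.mono_set fun x hx => ?_
      refine lt_of_le_of_lt ?_ hx.1
      push_cast
      linarith [(Nat.cast_nonneg i : (0 : ℝ) ≤ i)]
  have hA : Filter.Tendsto (fun M => emTerm s (N + M)) Filter.atTop (nhds 0) :=
    (tendsto_emTerm hs).comp (Filter.tendsto_add_atTop_nat N |>.congr fun M => add_comm _ _)
  have hlim2 := (hA.const_sub (emTerm s N)).sub hsum.hasSum.tendsto_sum_nat
  have := tendsto_nhds_unique (hlim.congr hpart) hlim2
  rw [this]
  ring

/-! ### The Euler–Maclaurin remainder in terms of the integrals `cosInt` -/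

lemma integral_Ioi_scale (n : ℕ) (s : ℂ) {N : ℕ} (hN : 0 < N) :
    ∫ x in Set.Ioi (N : ℝ), (Real.cos (2 * Real.pi * n * x) : ℂ) * (x : ℂ) ^ (-s - 2)
      = (N : ℂ) ^ (-s - 1) * cosInt (n * N) s := by
  have hN0 : (0 : ℝ) < N := by exact_mod_cast hN
  have hNC : (N : ℂ) ≠ 0 := by exact_mod_cast hN.ne'
  have h := integral_comp_mul_left_Ioi
    (fun x : ℝ => (Real.cos (2 * Real.pi * n * x) : ℂ) * (x : ℂ) ^ (-s - 2)) 1 hN0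
  have h2 : ∫ x in Set.Ioi (1 : ℝ), (Real.cos (2 * Real.pi * n * (N * x)) : ℂ) *
      ((N * x : ℝ) : ℂ) ^ (-s - 2) = (N : ℂ) ^ (-s - 2) * cosInt (n * N) s := by
    rw [cosInt, ← integral_const_mul]
    refine setIntegral_congr_fun measurableSet_Ioi fun x hx => ?_
    have hx0 : (0 : ℝ) ≤ x := (one_pos.trans hx).le
    have e : 2 * Real.pi * n * (N * x) = 2 * Real.pi * ((n * N : ℕ) : ℝ) * x := by
      push_cast; ring
    simp only [e]
    rw [Complex.ofReal_mul, Complex.mul_cpow_ofReal_nonneg hN0.le hx0, Complex.ofReal_natCast]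
    ring
  rw [h2, mul_one, Complex.real_smul] at h
  have e3 : (-s - 1 : ℂ) = (-s - 2) + 1 := by ring
  rw [e3, Complex.cpow_add _ _ hNC, Complex.cpow_one]
  push_cast at h
  push_cast
  field_simp at h
  rw [← h]
  ring

lemma integral_cosSeries {s : ℂ} (hs : 0 < s.re) {N : ℕ} (hN : 0 < N) :
    ∫ x in Set.Ioi (N : ℝ), (cosSeries x : ℂ) * (x : ℂ) ^ (-s - 2)
      = (N : ℂ) ^ (-s - 1) * ∑' m : ℕ+, 1 / ((m : ℕ) : ℂ) ^ 2 * cosInt (m * N) s := by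
  have hN0 : (0 : ℝ) < N := by exact_mod_cast hN
  set F : ℕ → ℝ → ℂ := fun n x => 1 / (n : ℂ) ^ 2 *
    ((Real.cos (2 * Real.pi * n * x) : ℂ) * (x : ℂ) ^ (-s - 2)) with hF
  have hr : IntegrableOn (fun x : ℝ => x ^ (-s.re - 2)) (Set.Ioi (N : ℝ)) :=
    integrableOn_Ioi_rpow_of_lt (by linarith) hN0
  have hint : ∀ n, Integrable (F n) (volume.restrict (Set.Ioi (N : ℝ))) := by
    intro n
    refine Integrable.const_mul ?_ _
    refine Integrable.bdd_mul (c := 1)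
      (integrableOn_Ioi_cpow_of_lt (by simp; linarith) hN0) ?_ ?_
    · exact Continuous.aestronglyMeasurable (by fun_prop)
    · refine Filter.Eventually.of_forall fun x => ?_
      rw [Complex.norm_real]
      exact Real.abs_cos_le_one _
  have hsum : Summable fun n => ∫ x in Set.Ioi (N : ℝ), ‖F n x‖ := by
    refine Summable.of_nonneg_of_le (fun n => integral_nonneg fun x => norm_nonneg _) (fun n => ?_)
      (summable_inv_sq.mul_right (∫ x in Set.Ioi (N : ℝ), x ^ (-s.re - 2)))
    rw [← integral_const_mul]
    refine setIntegral_mono_on (hint n).norm (hr.const_mul _) measurableSet_Ioi fun x hx => ?_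
    rw [hF, norm_mul]
    have e : ‖1 / (n : ℂ) ^ 2‖ = 1 / (n : ℝ) ^ 2 := by simp
    rw [e]
    exact mul_le_mul_of_nonneg_left (norm_integrand_le n s (hN0.trans hx)) (by positivity)
  have h := (hasSum_integral_of_summable_integral_norm hint hsum).tsum_eq
  have e1 : ∀ x : ℝ, ∑' n, F n x = (cosSeries x : ℂ) * (x : ℂ) ^ (-s - 2) := by
    intro x
    simp only [hF, cosSeries, ← mul_assoc]
    rw [tsum_mul_right, Complex.ofReal_tsum]
    push_cast
    rfl
  have e2 : ∀ n, ∫ x in Set.Ioi (N : ℝ), F n x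
      = (N : ℂ) ^ (-s - 1) * (1 / (n : ℂ) ^ 2 * cosInt (n * N) s) := by
    intro n
    rw [hF, integral_const_mul, integral_Ioi_scale n s hN]
    ring
  simp only [e1, e2] at h
  rw [← h, tsum_mul_left]
  congr 1
  refine (PNat.coe_injective.tsum_eq (f := fun n : ℕ => 1 / (n : ℂ) ^ 2 * cosInt (n * N) s)
    ?_).symm
  intro n hn
  have hn0 : n ≠ 0 := by
    rintro rfl
    simp at hn
  exact ⟨⟨n, Nat.pos_of_ne_zero hn0⟩, rfl⟩

/-! ### Convergence and holomorphy of the series -/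

/-- The term of index `(d, m)` of the double series obtained by writing `n = m d^{k-1}` in the
series of the theorem. -/
def wTerm (k : ℕ) (s : ℂ) (d m : ℕ) : ℂ :=
  (d : ℂ) ^ (-((k : ℂ) * s + k - 1)) / (m : ℂ) ^ 2 * cosInt (m * d ^ (k - 1)) s

/-- Majorant of `wTerm k s d m` on the half-plane `ε ≤ Re s`. -/
def wBound (k : ℕ) (ε : ℝ) (d m : ℕ) : ℝ :=
  (d : ℝ) ^ (-((k : ℝ) * ε + k - 1)) * (1 / (m : ℝ) ^ 2)

lemma cpow_mul_natCast_sub_one {k : ℕ} (hk : 2 ≤ k) (d : ℕ) :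
    (d : ℂ) ^ ((k : ℂ) - 1) = ((d ^ (k - 1) : ℕ) : ℂ) := by
  have : (k : ℂ) - 1 = ((k - 1 : ℕ) : ℂ) := by
    rw [Nat.cast_sub (by omega)]; simp
  rw [this, Complex.cpow_natCast]
  push_cast
  rfl

lemma sigma_term_eq {k : ℕ} (hk : 2 ≤ k) (s : ℂ) (n : ℕ+) :
    sigmaK (k - 1) ((k : ℂ) - 1 - (k : ℂ) * s) n / ((n : ℕ) : ℂ) ^ 2 * cosInt n s
      = ∑ d ∈ (n : ℕ).divisors.filter (fun d => d ^ (k - 1) ∣ (n : ℕ)),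
          wTerm k s d ((n : ℕ) / d ^ (k - 1)) := by
  rw [sigmaK, Finset.sum_div, Finset.sum_mul]
  refine Finset.sum_congr rfl fun d hd => ?_
  obtain ⟨hd1, hd2⟩ := Finset.mem_filter.1 hd
  have hd0 : 0 < d := Nat.pos_of_mem_divisors hd1
  have hdC : (d : ℂ) ≠ 0 := by exact_mod_cast hd0.ne'
  obtain ⟨c, hc⟩ := hd2
  have hc0 : c ≠ 0 := by rintro rfl; simp at hc
  have hcC : (c : ℂ) ≠ 0 := by exact_mod_cast hc0
  have hp : 0 < d ^ (k - 1) := pow_pos hd0 _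
  have hpC : ((d ^ (k - 1) : ℕ) : ℂ) ≠ 0 := by exact_mod_cast hp.ne'
  rw [wTerm, hc, Nat.mul_div_cancel_left _ hp, mul_comm c]
  congr 1
  have e : (k : ℂ) - 1 - k * s = -((k : ℂ) * s + k - 1) + (((k : ℂ) - 1) + ((k : ℂ) - 1)) := by
    ring
  rw [e, Complex.cpow_add _ _ hdC, Complex.cpow_add _ _ hdC, cpow_mul_natCast_sub_one hk,
    Nat.cast_mul]
  field_simp

lemma norm_wTerm_le {k : ℕ} {ε : ℝ} (hε : 0 < ε) {s : ℂ} (hs : ε ≤ s.re) {d : ℕ} (hd : 0 < d)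
    (m : ℕ) : ‖wTerm k s d m‖ ≤ wBound k ε d m := by
  rw [wTerm, wBound, norm_mul, norm_div, Complex.norm_natCast_cpow_of_pos hd]
  have h1 := norm_cosInt_le (m * d ^ (k - 1)) (hε.trans_le hs)
  have hd1 : (1 : ℝ) ≤ d := by exact_mod_cast hd
  have hre : (-((k : ℂ) * s + k - 1)).re = -((k : ℝ) * s.re + k - 1) := by simp
  have hm : ‖(m : ℂ) ^ 2‖ = (m : ℝ) ^ 2 := by simp
  rw [hre, hm, div_eq_mul_one_div]
  refine (mul_le_of_le_one_right (by positivity) h1).trans ?_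
  refine mul_le_mul_of_nonneg_right (Real.rpow_le_rpow_of_exponent_le hd1 ?_) (by positivity)
  have := mul_le_mul_of_nonneg_left hs (Nat.cast_nonneg k : (0 : ℝ) ≤ k)
  linarith

/-- The exponent of `d` is `-(kε + k - 1) < -1` since `k ≥ 2` and `ε > 0`. -/
lemma summable_wBound {k : ℕ} (hk : 2 ≤ k) {ε : ℝ} (hε : 0 < ε) :
    Summable fun p : ℕ+ × ℕ+ => wBound k ε p.1 p.2 := by
  have hk' : (2 : ℝ) ≤ k := by exact_mod_cast hk
  have h1 : Summable fun d : ℕ+ => ((d : ℕ) : ℝ) ^ (-((k : ℝ) * ε + k - 1)) := by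
    refine Summable.comp_injective (Real.summable_nat_rpow.2 ?_) PNat.coe_injective
    have : 0 < (k : ℝ) * ε := by positivity
    linarith
  have h2 : Summable fun m : ℕ+ => 1 / ((m : ℕ) : ℝ) ^ 2 :=
    summable_inv_sq.comp_injective PNat.coe_injective
  exact h1.mul_of_nonneg h2 (fun d => by positivity) fun m => by positivity

/-- Majorant, on the half-plane `ε ≤ Re s`, of the `n`-th term of the series of the theorem. -/
def wMajorant (k : ℕ) (ε : ℝ) (n : ℕ+) : ℝ :=
  ∑ d ∈ (n : ℕ).divisors.filter (fun d => d ^ (k - 1) ∣ (n : ℕ)),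
    wBound k ε d ((n : ℕ) / d ^ (k - 1))

lemma summable_wMajorant {k : ℕ} (hk : 2 ≤ k) {ε : ℝ} (hε : 0 < ε) :
    Summable (wMajorant k ε) :=
  (hasSum_reindex (k - 1) (by omega) (wBound k ε) (summable_wBound hk hε).hasSum).summable

lemma norm_sigma_term_le {k : ℕ} (hk : 2 ≤ k) {ε : ℝ} (hε : 0 < ε) {s : ℂ} (hs : ε ≤ s.re)
    (n : ℕ+) :
    ‖sigmaK (k - 1) ((k : ℂ) - 1 - (k : ℂ) * s) n / ((n : ℕ) : ℂ) ^ 2 * cosInt n s‖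
      ≤ wMajorant k ε n := by
  rw [sigma_term_eq hk]
  exact norm_sum_le_of_le _ fun d hd =>
    norm_wTerm_le hε hs (Nat.pos_of_mem_divisors (Finset.mem_filter.1 hd).1) _

lemma differentiableOn_series {k : ℕ} (hk : 2 ≤ k) :
    DifferentiableOn ℂ (fun s : ℂ => ∑' n : ℕ+,
      sigmaK (k - 1) ((k : ℂ) - 1 - (k : ℂ) * s) n / ((n : ℕ) : ℂ) ^ 2 * cosInt n s)
      {s : ℂ | 0 < s.re} := by
  intro s hs
  have hs' : 0 < s.re := hs
  have hε : 0 < s.re / 2 := by linarith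
  have hU : IsOpen {w : ℂ | s.re / 2 < w.re} := isOpen_lt continuous_const Complex.continuous_re
  have h := Complex.differentiableOn_tsum_of_summable_norm (summable_wMajorant hk hε)
    (F := fun (n : ℕ+) (s : ℂ) =>
      sigmaK (k - 1) ((k : ℂ) - 1 - (k : ℂ) * s) n / ((n : ℕ) : ℂ) ^ 2 * cosInt n s)
    (U := {w : ℂ | s.re / 2 < w.re}) ?_ hU ?_
  · exact (h.differentiableAt (hU.mem_nhds (by simp; linarith))).differentiableWithinAt
  · intro n w hw
    have hw' : s.re / 2 < w.re := hw
    refine DifferentiableAt.differentiableWithinAt ?_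
    refine DifferentiableAt.mul (DifferentiableAt.div_const ?_ _)
      (differentiableAt_cosInt n (by linarith))
    simp only [sigmaK]
    refine DifferentiableAt.fun_sum fun d hd => ?_
    have hd0 : (d : ℂ) ≠ 0 := by
      exact_mod_cast (Nat.pos_of_mem_divisors (Finset.mem_filter.1 hd).1).ne'
    exact DifferentiableAt.const_cpow (by fun_prop) (Or.inl hd0)
  · intro n w hw
    exact norm_sigma_term_le hk hε (le_of_lt hw) n

/-! ### The Dirichlet series of Wigert's divisor function -/

lemma tsum_pnat_tail {s : ℂ} {N : ℕ} (hN : 0 < N) :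
    ∑' m : ℕ+, (if N ≤ (m : ℕ) then ((m : ℕ) : ℂ) ^ (-s) else 0)
      = ∑' i : ℕ, ((N + i : ℕ) : ℂ) ^ (-s) := by
  let e : ℕ → ℕ+ := fun i => ⟨N + i, by omega⟩
  have he : Function.Injective e := by
    intro i j h
    have := congrArg PNat.val h
    simp only [e, PNat.mk_coe] at this
    change N + i = N + j at this
    omega
  rw [← he.tsum_eq (f := fun m : ℕ+ => if N ≤ (m : ℕ) then ((m : ℕ) : ℂ) ^ (-s) else 0)]
  · refine tsum_congr fun i => ?_
    simp [e]
  · intro m hm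
    have h : N ≤ (m : ℕ) := by
      by_contra h
      simp [h] at hm
    exact ⟨m - N, PNat.eq (by simp only [e, PNat.mk_coe]; omega)⟩

/-- The term `(dm)^{-s}`, restricted to `d^{k-1} ≤ m`, that is to `d^k ≤ dm`. -/
def dTerm (k : ℕ) (s : ℂ) (d m : ℕ) : ℂ :=
  if d ^ (k - 1) ≤ m then ((d * m : ℕ) : ℂ) ^ (-s) else 0

lemma summable_dTerm (k : ℕ) {s : ℂ} (hs : 1 < s.re) :
    Summable fun p : ℕ+ × ℕ+ => dTerm k s p.1 p.2 := by
  have h1 : Summable fun d : ℕ+ => ((d : ℕ) : ℝ) ^ (-s.re) :=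
    Summable.comp_injective (Real.summable_nat_rpow.2 (by linarith)) PNat.coe_injective
  have h2 := h1.mul_of_nonneg h1 (fun d => by positivity) fun m => by positivity
  refine Summable.of_norm_bounded h2 fun p => ?_
  rw [dTerm]
  split_ifs
  · rw [Complex.norm_natCast_cpow_of_pos (Nat.mul_pos p.1.pos p.2.pos), Nat.cast_mul,
      Real.mul_rpow (by positivity) (by positivity)]
    simp
  · rw [norm_zero]
    positivity

/-- The Dirichlet series of `wigertD k` as a double series over factorisations `j = dm`. -/
lemma hasSum_wigert {k : ℕ} (hk : 2 ≤ k) {s : ℂ} (hs : 1 < s.re) :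
    HasSum (fun j : ℕ+ => (wigertD k j : ℂ) * ((j : ℕ) : ℂ) ^ (-s))
      (∑' p : ℕ+ × ℕ+, dTerm k s p.1 p.2) := by
  have h := hasSum_reindex 1 one_ne_zero (dTerm k s) (summable_dTerm k hs).hasSum
  refine hasSum_of_forall_eq h fun j => ?_
  rw [wigertD, Finset.card_filter, Nat.cast_sum, Finset.sum_mul, Finset.sum_filter]
  refine Finset.sum_congr rfl fun d hd => ?_
  have hd0 : 0 < d := Nat.pos_of_mem_divisors hd
  obtain ⟨c, hc⟩ := Nat.dvd_of_mem_divisors hd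
  rw [pow_one, if_pos (Nat.dvd_of_mem_divisors hd), dTerm, hc, Nat.mul_div_cancel_left _ hd0]
  have hiff : d ^ k ≤ d * c ↔ d ^ (k - 1) ≤ c := by
    obtain ⟨q, rfl⟩ : ∃ q, k = q + 1 := ⟨k - 1, by omega⟩
    rw [pow_succ', Nat.add_sub_cancel]
    exact Nat.mul_le_mul_left_iff hd0
  by_cases h : d ^ (k - 1) ≤ c <;> simp [hiff, h]

lemma natCast_pow_cpow (d q : ℕ) (w : ℂ) :
    ((d ^ q : ℕ) : ℂ) ^ w = (d : ℂ) ^ ((q : ℂ) * w) := by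
  rw [Complex.natCast_cpow_natCast_mul]
  push_cast
  rfl

/-- For fixed `d`, the Euler–Maclaurin formula for the tail `m ≥ d^{k-1}`, multiplied by `d^{-s}`. -/
lemma fiber_identity {k : ℕ} (hk : 2 ≤ k) {s : ℂ} (hs : 1 < s.re) (d : ℕ+) :
    ∑' m : ℕ+, dTerm k s d m = ((d : ℕ) : ℂ) ^ (-s) * emTerm s ((d : ℕ) ^ (k - 1))
      - s * (s + 1) / (2 * (Real.pi : ℂ) ^ 2) * ∑' m : ℕ+, wTerm k s d m := by
  have hN : 0 < (d : ℕ) ^ (k - 1) := pow_pos d.pos _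
  have hdC : ((d : ℕ) : ℂ) ≠ 0 := by exact_mod_cast d.ne_zero
  have hq : ((k - 1 : ℕ) : ℂ) = (k : ℂ) - 1 := by
    rw [Nat.cast_sub (by omega)]; simp
  have e1 : ∀ m : ℕ+, dTerm k s d m = ((d : ℕ) : ℂ) ^ (-s) *
      (if (d : ℕ) ^ (k - 1) ≤ (m : ℕ) then ((m : ℕ) : ℂ) ^ (-s) else 0) := by
    intro m
    rw [dTerm]
    split_ifs
    · rw [Nat.cast_mul, Complex.natCast_mul_natCast_cpow]
    · simp
  have e2 : ∀ m : ℕ+, wTerm k s d m = ((d : ℕ) : ℂ) ^ (-((k : ℂ) * s + k - 1)) *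
      (1 / ((m : ℕ) : ℂ) ^ 2 * cosInt (m * (d : ℕ) ^ (k - 1)) s) := by
    intro m
    rw [wTerm]
    ring
  have e3 : ((d : ℕ) : ℂ) ^ (-((k : ℂ) * s + k - 1))
      = ((d : ℕ) : ℂ) ^ (-s) * (((d : ℕ) ^ (k - 1) : ℕ) : ℂ) ^ (-s - 1) := by
    rw [natCast_pow_cpow, ← Complex.cpow_add _ _ hdC, hq]
    ring_nf
  simp only [e1, e2]
  rw [tsum_mul_left, tsum_mul_left, tsum_pnat_tail hN, euler_maclaurin_tail hs hN,
    integral_cosSeries (by linarith) hN, e3]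
  ring

/-- Summed over `d`, the three boundary terms at `d^{k-1}` are the three zeta values. -/
lemma hasSum_emTerm {k : ℕ} (hk : 2 ≤ k) {s : ℂ} (hs : 1 < s.re) :
    HasSum (fun d : ℕ+ => ((d : ℕ) : ℂ) ^ (-s) * emTerm s ((d : ℕ) ^ (k - 1)))
      ((1 / 2) * riemannZeta ((k : ℂ) * s)
          + riemannZeta ((k : ℂ) * s - ((k : ℂ) - 1)) / (s - 1)
          + (s / 12) * riemannZeta ((k : ℂ) * s + (k : ℂ) - 1)) := by
  have hk' : (2 : ℝ) ≤ k := by exact_mod_cast hk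
  have hq : ((k - 1 : ℕ) : ℂ) = (k : ℂ) - 1 := by
    rw [Nat.cast_sub (by omega)]; simp
  have h1 := hasSum_zeta_pnat (w := (k : ℂ) * s) (by simp; nlinarith)
  have h2 := hasSum_zeta_pnat (w := (k : ℂ) * s - ((k : ℂ) - 1)) (by simp; nlinarith)
  have h3 := hasSum_zeta_pnat (w := (k : ℂ) * s + (k : ℂ) - 1) (by simp; nlinarith)
  refine hasSum_of_forall_eq
    (((h1.mul_left (1 / 2)).add (h2.div_const (s - 1))).add (h3.mul_left (s / 12))) fun d => ?_
  have hdC : ((d : ℕ) : ℂ) ≠ 0 := by exact_mod_cast d.ne_zero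
  have a1 : (-((k : ℂ) * s)) = -s + ((k : ℂ) - 1) * (-s) := by ring
  have a2 : (-((k : ℂ) * s - ((k : ℂ) - 1))) = -s + ((k : ℂ) - 1) * (1 - s) := by ring
  have a3 : (-((k : ℂ) * s + (k : ℂ) - 1)) = -s + ((k : ℂ) - 1) * (-s - 1) := by ring
  rw [a1, a2, a3, Complex.cpow_add _ _ hdC, Complex.cpow_add _ _ hdC, Complex.cpow_add _ _ hdC,
    emTerm, natCast_pow_cpow, natCast_pow_cpow, natCast_pow_cpow, hq]
  ring

lemma identity_of_one_lt_re {k : ℕ} (hk : 2 ≤ k) {s : ℂ} (hs : 1 < s.re) :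
    (1 / 2) * riemannZeta ((k : ℂ) * s)
        + riemannZeta ((k : ℂ) * s - ((k : ℂ) - 1)) / (s - 1)
        + (s / 12) * riemannZeta ((k : ℂ) * s + (k : ℂ) - 1)
        - s * (s + 1) / (2 * (Real.pi : ℂ) ^ 2) *
          ∑' n : ℕ+, sigmaK (k - 1) ((k : ℂ) - 1 - (k : ℂ) * s) n / ((n : ℕ) : ℂ) ^ 2 *
            cosInt n s
      = ∑' j : ℕ+, (wigertD k j : ℂ) * ((j : ℕ) : ℂ) ^ (-s) := by
  have hs0 : 0 < s.re := by linarith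
  have hW : Summable fun p : ℕ+ × ℕ+ => wTerm k s p.1 p.2 :=
    Summable.of_norm_bounded (summable_wBound hk hs0) fun p =>
      norm_wTerm_le hs0 le_rfl p.1.pos _
  have hD := summable_dTerm k hs
  have hWd : HasSum (fun d : ℕ+ => s * (s + 1) / (2 * (Real.pi : ℂ) ^ 2) *
      ∑' m : ℕ+, wTerm k s d m)
      (s * (s + 1) / (2 * (Real.pi : ℂ) ^ 2) * ∑' p : ℕ+ × ℕ+, wTerm k s p.1 p.2) :=
    (hW.hasSum.prod_fiberwise fun d => (hW.prod_factor d).hasSum).mul_left _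
  have hDd : HasSum (fun d : ℕ+ => ∑' m : ℕ+, dTerm k s d m)
      (∑' p : ℕ+ × ℕ+, dTerm k s p.1 p.2) :=
    hD.hasSum.prod_fiberwise fun d => (hD.prod_factor d).hasSum
  have hR := (hasSum_emTerm hk hs).sub hWd
  rw [tsum_congr (sigma_term_eq hk s),
    (hasSum_reindex (k - 1) (by omega) (wTerm k s) hW.hasSum).tsum_eq,
    (hasSum_wigert hk hs).tsum_eq]
  exact hR.unique (hasSum_of_forall_eq hDd fun d => (fiber_identity hk hs d).symm)

theorem wigert_dirichlet_series_cos_representation (k : ℕ) (hk : 2 ≤ k) :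
    (∀ s : ℂ, 0 < s.re → s ≠ 1 → s ≠ 1 / (k : ℂ) →
      Summable (fun n : ℕ+ =>
        ‖sigmaK (k - 1) ((k : ℂ) - 1 - (k : ℂ) * s) n / ((n : ℕ) : ℂ) ^ 2 *
          ∫ x in Set.Ioi (1 : ℝ),
            (Real.cos (2 * Real.pi * (n : ℕ) * x) : ℂ) * (x : ℂ) ^ (-s - 2)‖)) ∧
    AnalyticOnNhd ℂ (fun s : ℂ =>
        (1 / 2) * riemannZeta ((k : ℂ) * s)
          + riemannZeta ((k : ℂ) * s - ((k : ℂ) - 1)) / (s - 1)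
          + (s / 12) * riemannZeta ((k : ℂ) * s + (k : ℂ) - 1)
          - s * (s + 1) / (2 * (Real.pi : ℂ) ^ 2) *
            ∑' n : ℕ+, sigmaK (k - 1) ((k : ℂ) - 1 - (k : ℂ) * s) n / ((n : ℕ) : ℂ) ^ 2 *
              ∫ x in Set.Ioi (1 : ℝ),
                (Real.cos (2 * Real.pi * (n : ℕ) * x) : ℂ) * (x : ℂ) ^ (-s - 2))
      ({s : ℂ | 0 < s.re} \ {1, 1 / (k : ℂ)}) ∧
    ∀ s : ℂ, 1 < s.re →
      (1 / 2) * riemannZeta ((k : ℂ) * s)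
          + riemannZeta ((k : ℂ) * s - ((k : ℂ) - 1)) / (s - 1)
          + (s / 12) * riemannZeta ((k : ℂ) * s + (k : ℂ) - 1)
          - s * (s + 1) / (2 * (Real.pi : ℂ) ^ 2) *
            ∑' n : ℕ+, sigmaK (k - 1) ((k : ℂ) - 1 - (k : ℂ) * s) n / ((n : ℕ) : ℂ) ^ 2 *
              ∫ x in Set.Ioi (1 : ℝ),
                (Real.cos (2 * Real.pi * (n : ℕ) * x) : ℂ) * (x : ℂ) ^ (-s - 2)
        = ∑' j : ℕ+, (wigertD k j : ℂ) * ((j : ℕ) : ℂ) ^ (-s) := by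
  refine ⟨fun s hs _ _ => ?_, ?_, fun s hs => ?_⟩
  · exact (summable_wMajorant hk hs).of_nonneg_of_le (fun n => norm_nonneg _)
      fun n => norm_sigma_term_le hk hs le_rfl n
  · have hk0 : (k : ℂ) ≠ 0 := by exact_mod_cast (by omega : k ≠ 0)
    have hk' : (2 : ℝ) ≤ k := by exact_mod_cast hk
    have hO : IsOpen {s : ℂ | 0 < s.re} := isOpen_lt continuous_const Complex.continuous_re
    refine DifferentiableOn.analyticOnNhd ?_ (hO.sdiff (Set.toFinite _).isClosed)
    rintro s ⟨hs, hne⟩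
    have hs' : 0 < s.re := hs
    simp only [Set.mem_insert_iff, Set.mem_singleton_iff, not_or] at hne
    obtain ⟨hne1, hne2⟩ := hne
    have hser := (differentiableOn_series hk).differentiableAt (hO.mem_nhds hs)
    refine DifferentiableAt.differentiableWithinAt ?_
    have z1 : DifferentiableAt ℂ (fun s : ℂ => riemannZeta ((k : ℂ) * s)) s := by
      refine DifferentiableAt.comp (g := riemannZeta) s (differentiableAt_riemannZeta ?_)
        (by fun_prop)
      intro h
      exact hne2 (by field_simp; linear_combination h)
    have z2 : DifferentiableAt ℂ (fun s : ℂ => riemannZeta ((k : ℂ) * s - ((k : ℂ) - 1))) s := by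
      refine DifferentiableAt.comp (g := riemannZeta) s (differentiableAt_riemannZeta ?_)
        (by fun_prop)
      intro h
      exact hne1 (mul_left_cancel₀ hk0 (by linear_combination h))
    have z3 : DifferentiableAt ℂ (fun s : ℂ => riemannZeta ((k : ℂ) * s + (k : ℂ) - 1)) s := by
      refine DifferentiableAt.comp (g := riemannZeta) s (differentiableAt_riemannZeta ?_)
        (by fun_prop)
      intro h
      have := congrArg Complex.re h
      simp at this
      nlinarith
    have p1 : DifferentiableAt ℂ (fun s : ℂ => s - 1) s := by fun_prop
    have p2 : DifferentiableAt ℂ (fun s : ℂ => s / 12) s := by fun_prop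
    have p3 : DifferentiableAt ℂ (fun s : ℂ => s * (s + 1) / (2 * (Real.pi : ℂ) ^ 2)) s := by
      fun_prop
    refine DifferentiableAt.fun_sub (DifferentiableAt.fun_add (DifferentiableAt.fun_add
      (z1.const_mul _) (z2.fun_div p1 (sub_ne_zero.2 hne1))) (p2.fun_mul z3)) (p3.fun_mul ?_)
    exact hser
  · exact identity_of_one_lt_re hk hs
end
end

section
/- Let s ∈ ℂ with 0 < Re(s) < 1, let n ≥ 1 be an integer, and let 0 < η < 1. Then (1/(2π)) ∫_{−∞}^{∞} [Γ(s + η + it) / cos(π(η + it)/2)] (2πn)^{−(η + it)} dt = (2/π) Γ(s + 1) ∫_1^∞ sin(2πnx) x^{−s−1} dx, both integrals converging absolutely. -/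
noncomputable section

/-!
Both sides are equal to the same real-variable integral. Put `A = 2πn`. Then

* `(1/2π) ∫ Γ(s+w) / cos(πw/2) · A^{-w} dt = (2/π) ∫₀^∞ y^s e^{-y} A / (y² + A²) dy` with
  `w = η + it` (`line_integral_eq`): insert Euler's integral for `Γ(s+w)` and exchange the
  integrals; the inner integral is then the inverse Mellin transform of `1 / cos(πw/2)`, evaluated
  at `A / y` by Mellin inversion (`inverse_mellin_inv_cos`). The Mellin transform needed there is
  `∫₀^∞ x^w / (1 + x²) dx = (π/2) / cos(πw/2)` (`hasMellin_inv_one_add_sq`), a form of Euler's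
  reflection formula.
* `Γ(s+1) ∫₁^∞ sin(Ax) x^{-s-1} dx = ∫₀^∞ y^s e^{-y} A / (y² + A²) dy` (`sin_integral_eq`): insert
  `Γ(s+1) x^{-s-1} = ∫₀^∞ y^s e^{-xy} dy` and exchange the integrals; the inner integral is a Laplace
  transform, which is this simple because `e^{iA} = 1`.

The exchange of integrals on the vertical line is justified by
`|cos(π(η + it)/2)| ≥ cos(πη/2) (1 + t²)` and `|Γ|` being dominated by Euler's integral on the real
axis, which also yields absolute convergence of the line integral.
-/

open MeasureTheory Set

/-! ### Mellin transform of `1 / (1 + x²)` -/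

/-- Writing `1 / (1 + x) = ∫₀^∞ e^{-t(1+x)} dt` and exchanging integrals, the Mellin transform
becomes `Γ(a) Γ(1 - a)`, to which the reflection formula applies. -/
theorem hasMellin_inv_one_add {a : ℂ} (h0 : 0 < a.re) (h1 : a.re < 1) :
    HasMellin (fun x : ℝ => ((1 : ℂ) + x)⁻¹) a (Real.pi / Complex.sin (Real.pi * a)) := by
  set F : ℝ × ℝ → ℂ := fun p =>
    (p.1 : ℂ) ^ (a - 1) * Complex.exp (-(p.2 * p.1)) * Complex.exp (-p.2) with hF
  set μ := (volume : Measure ℝ).restrict (Ioi 0) with hμ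
  have hmeas : AEStronglyMeasurable F (μ.prod μ) := by
    apply Measurable.aestronglyMeasurable
    fun_prop
  have hinner : ∀ t : ℝ, 0 < t →
      ∫ x, F (x, t) ∂μ = Complex.Gamma a * (Complex.exp (-t) * (t : ℂ) ^ ((1 - a) - 1)) := by
    intro t ht
    simp only [hF]
    rw [integral_mul_const, Complex.integral_cpow_mul_exp_neg_mul_Ioi h0 ht]
    have : ((1 : ℂ) / t) ^ a = (t : ℂ) ^ ((1 - a) - 1) := by
      rw [one_div, Complex.inv_cpow _ _ (by
        rw [Complex.arg_ofReal_of_nonneg ht.le]; exact Real.pi_pos.ne), ← Complex.cpow_neg]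
      congr 1; ring
    rw [this]; ring
  have hnorm : ∀ t : ℝ, ∀ x : ℝ, 0 < x → ‖F (x, t)‖ =
      x ^ (a.re - 1) * Real.exp (-(t * x)) * Real.exp (-t) := by
    intro t x hx
    simp only [hF, norm_mul]
    rw [Complex.norm_cpow_eq_rpow_re_of_pos hx, Complex.norm_exp, Complex.norm_exp]
    simp
  have hint : ∀ t : ℝ, 0 < t → Integrable (fun x => F (x, t)) μ := by
    intro t ht
    simp only [hF]
    refine Integrable.mul_const (f := fun x : ℝ =>
      (x : ℂ) ^ (a - 1) * Complex.exp (-(t * x))) ?_ _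
    -- The integral has a nonzero closed form, whereas a non-integrable function has integral `0`.
    apply Integrable.of_integral_ne_zero
    rw [Complex.integral_cpow_mul_exp_neg_mul_Ioi h0 ht]
    refine mul_ne_zero ?_ (Complex.Gamma_ne_zero_of_re_pos h0)
    simp [Complex.cpow_eq_zero_iff, ht.ne']
  have hFint : Integrable F (μ.prod μ) := by
    rw [integrable_prod_iff' hmeas]
    constructor
    · filter_upwards [ae_restrict_mem measurableSet_Ioi] with t ht using hint t ht
    · have h2 : Integrable (fun t : ℝ => Real.Gamma a.re *
          (Real.exp (-t) * t ^ ((1 - a.re) - 1))) μ :=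
        (Real.GammaIntegral_convergent (by linarith : 0 < 1 - a.re)).const_mul _
      refine h2.congr ?_
      filter_upwards [ae_restrict_mem measurableSet_Ioi] with t ht
      have ht : 0 < t := ht
      have : ∫ x, ‖F (x, t)‖ ∂μ =
          ∫ x in Ioi 0, x ^ (a.re - 1) * Real.exp (-(t * x)) * Real.exp (-t) :=
        setIntegral_congr_fun measurableSet_Ioi (fun x hx => hnorm t x hx)
      rw [this, integral_mul_const, Real.integral_rpow_mul_exp_neg_mul_Ioi h0 ht, one_div,
        Real.inv_rpow ht.le, ← Real.rpow_neg ht.le]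
      ring_nf
  have houter : ∀ x : ℝ, 0 < x → ∫ t, F (x, t) ∂μ = (x : ℂ) ^ (a - 1) * ((1 : ℂ) + x)⁻¹ := by
    intro x hx
    have : ∀ t : ℝ, F (x, t) = (x : ℂ) ^ (a - 1) * Complex.exp (-(1 + x : ℂ) * t) := by
      intro t
      simp only [hF]
      rw [mul_assoc, ← Complex.exp_add]
      ring_nf
    simp_rw [this]
    rw [integral_const_mul, integral_exp_mul_complex_Ioi (by simp; linarith)]
    rw [Complex.ofReal_zero, mul_zero, Complex.exp_zero, neg_div_neg_eq, one_div]
  refine ⟨?_, ?_⟩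
  · refine (hFint.integral_prod_left).congr ?_
    filter_upwards [ae_restrict_mem measurableSet_Ioi] with x hx
    rw [houter x hx, smul_eq_mul]
  · calc mellin (fun x : ℝ => ((1 : ℂ) + x)⁻¹) a = ∫ x, ∫ t, F (x, t) ∂μ ∂μ := by
          refine setIntegral_congr_fun measurableSet_Ioi (fun x hx => ?_)
          simp only [smul_eq_mul]
          rw [houter x hx]
      _ = ∫ t, ∫ x, F (x, t) ∂μ ∂μ := integral_integral_swap hFint
      _ = ∫ t : ℝ in Ioi 0, Complex.Gamma a * (Complex.exp (-t) * (t : ℂ) ^ ((1 - a) - 1)) :=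
          setIntegral_congr_fun measurableSet_Ioi (fun t ht => hinner t ht)
      _ = Complex.Gamma a * Complex.Gamma (1 - a) := by
          rw [integral_const_mul, Complex.Gamma_eq_integral (s := 1 - a) (by simpa using h1)]
          simp [Complex.GammaIntegral]
      _ = _ := Complex.Gamma_mul_Gamma_one_sub a

theorem hasMellin_inv_one_add_sq {w : ℂ} (h0 : -1 < w.re) (h1 : w.re < 1) :
    HasMellin (fun x : ℝ => ((1 : ℂ) + (x : ℂ) ^ 2)⁻¹) (w + 1)
      (Real.pi / 2 / Complex.cos (Real.pi * w / 2)) := by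
  have h : HasMellin _ _ _ := hasMellin_inv_one_add (a := (w + 1) / 2)
    (by simp; linarith) (by simp; linarith)
  have e : (fun x : ℝ => ((1 : ℂ) + (x : ℂ) ^ 2)⁻¹) =
      fun x : ℝ => (fun x : ℝ => ((1 : ℂ) + x)⁻¹) (x ^ (2 : ℝ)) := by
    ext x; simp
  refine ⟨?_, ?_⟩
  · rw [e]
    refine (MellinConvergent.comp_rpow (f := fun x : ℝ => ((1 : ℂ) + x)⁻¹) two_ne_zero).2 ?_
    simpa using h.1
  · rw [e]
    refine (mellin_comp_rpow (fun x : ℝ => ((1 : ℂ) + x)⁻¹) _ 2).trans ?_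
    have h2 := h.2
    simp only [Complex.ofReal_ofNat]
    rw [h2, show (Real.pi : ℂ) * ((w + 1) / 2) = Real.pi * w / 2 + Real.pi / 2 by ring,
      Complex.sin_add_pi_div_two]
    norm_num
    ring

/-! ### Decay of `1 / cos` on vertical lines and Mellin inversion -/

/-- The real part of `cos(π(η + it)/2)` is `cos(πη/2) cosh(πt/2)`, and `cosh(πt/2) ≥ 1 + t²`. -/
theorem le_norm_cos {η : ℝ} (hη0 : 0 < η) (hη1 : η < 1) (t : ℝ) :
    0 < Real.cos (Real.pi * η / 2) ∧ Real.cos (Real.pi * η / 2) * (1 + t ^ 2) ≤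
      ‖Complex.cos ((Real.pi : ℂ) * ((η : ℂ) + (t : ℂ) * Complex.I) / 2)‖ := by
  have hc : 0 < Real.cos (Real.pi * η / 2) := by
    apply Real.cos_pos_of_mem_Ioo
    constructor <;> nlinarith [Real.pi_pos]
  refine ⟨hc, ?_⟩
  have hcosh : 1 + t ^ 2 ≤ Real.cosh (Real.pi * t / 2) := by
    have e : Real.cosh (Real.pi * t / 2) = 1 + 2 * Real.sinh (Real.pi * t / 4) ^ 2 := by
      rw [show Real.pi * t / 2 = 2 * (Real.pi * t / 4) by ring, Real.cosh_two_mul, Real.cosh_sq]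
      ring
    have hs : (Real.pi * t / 4) ^ 2 ≤ Real.sinh (Real.pi * t / 4) ^ 2 := by
      rw [sq_le_sq]
      rw [Real.abs_sinh]
      exact Real.self_le_sinh_iff.2 (abs_nonneg _)
    have : 9 * t ^ 2 ≤ Real.pi ^ 2 * t ^ 2 := by
      gcongr; nlinarith [Real.pi_gt_three]
    rw [e]
    nlinarith
  have hre : (Complex.cos ((Real.pi : ℂ) * ((η : ℂ) + (t : ℂ) * Complex.I) / 2)).re =
      Real.cos (Real.pi * η / 2) * Real.cosh (Real.pi * t / 2) := by
    rw [show (Real.pi : ℂ) * ((η : ℂ) + (t : ℂ) * Complex.I) / 2 =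
      ((Real.pi * η / 2 : ℝ) : ℂ) + ((Real.pi * t / 2 : ℝ) : ℂ) * Complex.I by push_cast; ring,
      Complex.cos_add_mul_I, ← Complex.ofReal_cos, ← Complex.ofReal_sin, ← Complex.ofReal_cosh,
      ← Complex.ofReal_sinh, ← Complex.ofReal_mul, ← Complex.ofReal_mul, Complex.sub_re,
      Complex.re_ofReal_mul, Complex.ofReal_re, Complex.I_re, mul_zero, sub_zero]
  calc _ ≤ Real.cos (Real.pi * η / 2) * Real.cosh (Real.pi * t / 2) := by gcongr
    _ ≤ _ := by rw [← hre]; exact Complex.re_le_norm _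

theorem integrable_inv_cos {η : ℝ} (hη0 : 0 < η) (hη1 : η < 1) :
    Integrable (fun t : ℝ =>
      (Complex.cos ((Real.pi : ℂ) * ((η : ℂ) + (t : ℂ) * Complex.I) / 2))⁻¹) := by
  refine (integrable_inv_one_add_sq.const_mul (Real.cos (Real.pi * η / 2))⁻¹).mono'
    (by apply Measurable.aestronglyMeasurable; fun_prop) (ae_of_all _ fun t => ?_)
  obtain ⟨h1, h2⟩ := le_norm_cos hη0 hη1 t
  rw [norm_inv, ← mul_inv]
  exact inv_anti₀ (by positivity) h2

/-- Mellin inversion for `x ↦ 1 / (1 + x²)` on the line `Re = η + 1`; the factor `4` is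
`2π · (2/π)`. -/
theorem inverse_mellin_inv_cos {η : ℝ} (hη0 : 0 < η) (hη1 : η < 1) {u : ℝ} (hu : 0 < u) :
    ∫ t : ℝ, (u : ℂ) ^ (-((η : ℂ) + (t : ℂ) * Complex.I)) *
        (Complex.cos ((Real.pi : ℂ) * ((η : ℂ) + (t : ℂ) * Complex.I) / 2))⁻¹
      = 4 * (u / (1 + (u : ℂ) ^ 2)) := by
  set f : ℝ → ℂ := fun x : ℝ => ((1 : ℂ) + (x : ℂ) ^ 2)⁻¹ with hf
  have hM : ∀ t : ℝ, HasMellin f (((η + 1 : ℝ) : ℂ) + t * Complex.I) (Real.pi / 2 *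
      (Complex.cos ((Real.pi : ℂ) * ((η : ℂ) + (t : ℂ) * Complex.I) / 2))⁻¹) := by
    intro t
    have := hasMellin_inv_one_add_sq (w := (η : ℂ) + t * Complex.I) (by simp; linarith)
      (by simpa using hη1)
    rw [← div_eq_mul_inv]
    convert this using 1
    push_cast; ring
  have hne : ∀ x : ℝ, (1 : ℂ) + (x : ℂ) ^ 2 ≠ 0 := by
    intro x
    exact_mod_cast (by positivity : (1 : ℝ) + x ^ 2 ≠ 0)
  have key := mellinInv_mellin_eq (η + 1) f hu (by simpa using (hM 0).1)
    (by
      unfold Complex.VerticalIntegrable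
      simp_rw [fun t : ℝ => (hM t).2]
      exact (integrable_inv_cos hη0 hη1).const_mul _)
    (by
      refine ContinuousAt.inv₀ (by fun_prop) (hne u))
  unfold mellinInv at key
  simp_rw [fun t : ℝ => (hM t).2] at key
  have hu' : (u : ℂ) ≠ 0 := by exact_mod_cast hu.ne'
  have e : ∀ t : ℝ, (u : ℂ) ^ (-(((η + 1 : ℝ) : ℂ) + t * Complex.I)) • (Real.pi / 2 *
      (Complex.cos ((Real.pi : ℂ) * ((η : ℂ) + (t : ℂ) * Complex.I) / 2))⁻¹) =
      (Real.pi / 2 / u) * ((u : ℂ) ^ (-((η : ℂ) + (t : ℂ) * Complex.I)) *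
        (Complex.cos ((Real.pi : ℂ) * ((η : ℂ) + (t : ℂ) * Complex.I) / 2))⁻¹) := by
    intro t
    rw [show -(((η + 1 : ℝ) : ℂ) + t * Complex.I) = -((η : ℂ) + (t : ℂ) * Complex.I) - 1 by
      push_cast; ring, Complex.cpow_sub _ _ hu', Complex.cpow_one, smul_eq_mul]
    ring
  simp_rw [e] at key
  rw [integral_const_mul, hf] at key
  have hpi : (Real.pi : ℂ) ≠ 0 := by exact_mod_cast Real.pi_ne_zero
  generalize (∫ t : ℝ, (u : ℂ) ^ (-((η : ℂ) + (t : ℂ) * Complex.I)) *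
        (Complex.cos ((Real.pi : ℂ) * ((η : ℂ) + (t : ℂ) * Complex.I) / 2))⁻¹) = J at key ⊢
  have h1 := hne u
  rw [Complex.real_smul] at key
  push_cast at key
  field_simp at key ⊢
  linear_combination key

/-! ### The sine integral -/

/-- The Laplace transform of `sin(Ax)` on `(1, ∞)`, when `A` is a multiple of `2π`, so that
`sin A = 0` and `cos A = 1`. -/
theorem integral_sin_mul_exp {A y : ℝ} (hy : 0 < y) (hA : 0 < A)
    (hexp : Complex.exp (A * Complex.I) = 1) :
    ∫ x : ℝ in Ioi 1, (Real.sin (A * x) : ℂ) * Complex.exp (-(x * y)) =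
      Complex.exp (-y) * (A / ((y : ℂ) ^ 2 + (A : ℂ) ^ 2)) := by
  have e : ∀ x : ℝ, (Real.sin (A * x) : ℂ) * Complex.exp (-(x * y)) =
      Complex.I / 2 * (Complex.exp ((-y - A * Complex.I) * x) -
        Complex.exp ((-y + A * Complex.I) * x)) := by
    intro x
    rw [Complex.ofReal_sin, Complex.sin,
      show (-y - A * Complex.I) * x = -((A * x : ℝ) : ℂ) * Complex.I + -(x * y) by
        push_cast; ring,
      show (-y + A * Complex.I) * x = ((A * x : ℝ) : ℂ) * Complex.I + -(x * y) by
        push_cast; ring, Complex.exp_add, Complex.exp_add]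
    ring
  have hexp' : Complex.exp (-(A * Complex.I)) = 1 := by rw [Complex.exp_neg, hexp, inv_one]
  have h1 : (-y - A * Complex.I : ℂ).re < 0 := by simpa using hy
  have h2 : (-y + A * Complex.I : ℂ).re < 0 := by simpa using hy
  simp_rw [e]
  rw [integral_const_mul, integral_sub (integrableOn_exp_mul_complex_Ioi h1 1)
    (integrableOn_exp_mul_complex_Ioi h2 1), integral_exp_mul_complex_Ioi h1,
    integral_exp_mul_complex_Ioi h2, Complex.ofReal_one, mul_one, mul_one, sub_eq_add_neg (-y : ℂ),
    Complex.exp_add, Complex.exp_add, hexp, hexp']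
  have n1 : (-y + -(A * Complex.I) : ℂ) ≠ 0 := by
    rw [← sub_eq_add_neg]; intro h; rw [h] at h1; simp at h1
  have n2 : (-y + A * Complex.I : ℂ) ≠ 0 := by
    intro h; rw [h] at h2; simp at h2
  have n3 : ((y : ℂ) ^ 2 + (A : ℂ) ^ 2) ≠ 0 := by
    exact_mod_cast (by positivity : y ^ 2 + A ^ 2 ≠ 0)
  have n4 : (y : ℂ) ^ 2 + (A : ℂ) ^ 2 = (-y + -(A * Complex.I)) * (-y + A * Complex.I) := by
    ring_nf; simp
  have n5 : (-y + -(A * Complex.I) : ℂ) - (-y + A * Complex.I) = -(2 * A * Complex.I) := by ring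
  rw [n4]
  generalize (-y + -(A * Complex.I) : ℂ) = p at n1 n5 ⊢
  generalize (-y + A * Complex.I : ℂ) = q at n2 n5 ⊢
  field_simp
  linear_combination Complex.I * n5 - 2 * A * Complex.I_mul_I

/-- Fubini applied to `sin(Ax) y^s e^{-xy}` on `(1, ∞) × (0, ∞)`. -/
theorem sin_integral_eq {s : ℂ} (hs0 : 0 < s.re) {A : ℝ} (hA : 0 < A)
    (hexp : Complex.exp (A * Complex.I) = 1) :
    IntegrableOn (fun x : ℝ => (Real.sin (A * x) : ℂ) * (x : ℂ) ^ (-s - 1)) (Ioi 1) ∧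
    Complex.Gamma (s + 1) * ∫ x in Ioi (1 : ℝ), (Real.sin (A * x) : ℂ) * (x : ℂ) ^ (-s - 1) =
      ∫ y : ℝ in Ioi 0, (y : ℂ) ^ s * (Complex.exp (-y) * (A / ((y : ℂ) ^ 2 + (A : ℂ) ^ 2))) := by
  set F : ℝ × ℝ → ℂ := fun p =>
    (Real.sin (A * p.1) : ℂ) * ((p.2 : ℂ) ^ s * Complex.exp (-(p.1 * p.2))) with hF
  set μ := (volume : Measure ℝ).restrict (Ioi 0) with hμ
  set ν := (volume : Measure ℝ).restrict (Ioi 1) with hν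
  have hmeas : AEStronglyMeasurable F (ν.prod μ) := by
    apply Measurable.aestronglyMeasurable
    fun_prop
  have hs1 : 0 < (s + 1).re := by simp; linarith
  have hint0 : ∀ x : ℝ, 0 < x → ∫ y : ℝ in Ioi 0, (y : ℂ) ^ s * Complex.exp (-(x * y)) =
      Complex.Gamma (s + 1) * (x : ℂ) ^ (-s - 1) := by
    intro x hx
    have := Complex.integral_cpow_mul_exp_neg_mul_Ioi hs1 hx
    rw [add_sub_cancel_right] at this
    rw [this, one_div, Complex.inv_cpow _ _ (by
        rw [Complex.arg_ofReal_of_nonneg hx.le]; exact Real.pi_pos.ne), ← Complex.cpow_neg,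
        neg_add', mul_comm]
  have hinner : ∀ x : ℝ, 0 < x → ∫ y, F (x, y) ∂μ =
      Complex.Gamma (s + 1) * ((Real.sin (A * x) : ℂ) * (x : ℂ) ^ (-s - 1)) := by
    intro x hx
    simp only [hF]
    rw [integral_const_mul, hint0 x hx]
    ring
  have hG : Complex.Gamma (s + 1) ≠ 0 := Complex.Gamma_ne_zero_of_re_pos hs1
  have hFint : Integrable F (ν.prod μ) := by
    rw [integrable_prod_iff hmeas]
    have hx0 : ∀ᵐ x ∂ν, 0 < x := by
      filter_upwards [ae_restrict_mem measurableSet_Ioi] with x hx using zero_lt_one.trans hx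
    constructor
    · filter_upwards [hx0] with x hx
      simp only [hF]
      refine Integrable.const_mul (f := fun y : ℝ =>
        (y : ℂ) ^ s * Complex.exp (-(x * y))) ?_ _
      apply Integrable.of_integral_ne_zero
      rw [hint0 x hx]
      refine mul_ne_zero hG ?_
      simp [Complex.cpow_eq_zero_iff, hx.ne']
    · have h2 : Integrable (fun x : ℝ => Real.Gamma (s.re + 1) * x ^ (-(s.re + 1))) ν :=
        (integrableOn_Ioi_rpow_of_lt (by linarith) one_pos).const_mul _
      refine h2.mono' hmeas.norm.integral_prod_right' ?_
      filter_upwards [hx0] with x hx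
      rw [Real.norm_of_nonneg (integral_nonneg fun _ => norm_nonneg _)]
      have : ∫ y, ‖F (x, y)‖ ∂μ =
          ∫ y in Ioi 0, |Real.sin (A * x)| * (y ^ ((s.re + 1) - 1) * Real.exp (-(x * y))) := by
        refine setIntegral_congr_fun measurableSet_Ioi (fun y hy => ?_)
        simp only [hF, norm_mul]
        rw [Complex.norm_cpow_eq_rpow_re_of_pos hy, Complex.norm_exp, Complex.norm_real]
        simp
      rw [this, integral_const_mul, Real.integral_rpow_mul_exp_neg_mul_Ioi (by linarith) hx,
        one_div, Real.inv_rpow hx.le, ← Real.rpow_neg hx.le, mul_comm (x ^ _)]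
      have h3 : 0 ≤ Real.Gamma (s.re + 1) * x ^ (-(s.re + 1)) :=
        mul_nonneg (Real.Gamma_nonneg_of_nonneg (by linarith)) (by positivity)
      exact mul_le_of_le_one_left h3 (Real.abs_sin_le_one _)
  constructor
  · refine (hFint.integral_prod_left.const_mul (Complex.Gamma (s + 1))⁻¹).congr ?_
    filter_upwards [ae_restrict_mem measurableSet_Ioi] with x hx
    rw [hinner x (zero_lt_one.trans hx), inv_mul_cancel_left₀ hG]
  · rw [← integral_const_mul]
    calc _ = ∫ x, ∫ y, F (x, y) ∂μ ∂ν :=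
          setIntegral_congr_fun measurableSet_Ioi
            (fun x hx => (hinner x (zero_lt_one.trans hx)).symm)
      _ = ∫ y, ∫ x, F (x, y) ∂ν ∂μ := integral_integral_swap hFint
      _ = _ := by
          refine setIntegral_congr_fun measurableSet_Ioi (fun y hy => ?_)
          simp only [hF]
          rw [← integral_sin_mul_exp hy hA hexp, ← integral_const_mul]
          congr 1; ext x; ring

/-! ### The line integral -/

/-- Fubini applied to `e^{-y} y^{s+w-1} A^{-w} / cos(πw/2)`, with `w = η + it`, on
`ℝ × (0, ∞)`. -/
theorem line_integral_eq {s : ℂ} (hs0 : 0 < s.re) {A : ℝ} (hA : 0 < A)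
    {η : ℝ} (hη0 : 0 < η) (hη1 : η < 1) :
    Integrable (fun t : ℝ => Complex.Gamma (s + ((η : ℂ) + (t : ℂ) * Complex.I)) /
        Complex.cos ((Real.pi : ℂ) * ((η : ℂ) + (t : ℂ) * Complex.I) / 2) *
        (A : ℂ) ^ (-((η : ℂ) + (t : ℂ) * Complex.I))) ∧
    ∫ t : ℝ, Complex.Gamma (s + ((η : ℂ) + (t : ℂ) * Complex.I)) /
        Complex.cos ((Real.pi : ℂ) * ((η : ℂ) + (t : ℂ) * Complex.I) / 2) *
        (A : ℂ) ^ (-((η : ℂ) + (t : ℂ) * Complex.I)) =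
      4 * ∫ y : ℝ in Ioi 0,
        (y : ℂ) ^ s * (Complex.exp (-y) * (A / ((y : ℂ) ^ 2 + (A : ℂ) ^ 2))) := by
  set w : ℝ → ℂ := fun t => (η : ℂ) + (t : ℂ) * Complex.I with hw
  have hwre : ∀ t, (w t).re = η := by intro t; simp [hw]
  have hwm : Measurable w := by simp only [hw]; fun_prop
  set C : ℝ → ℂ := fun t => (Complex.cos ((Real.pi : ℂ) * w t / 2))⁻¹ with hC
  have hCm : Measurable C := by simp only [hC]; fun_prop
  have hCint : Integrable C := integrable_inv_cos hη0 hη1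
  set μ := (volume : Measure ℝ).restrict (Ioi 0) with hμ
  set F : ℝ × ℝ → ℂ := fun p => C p.1 * (A : ℂ) ^ (-w p.1) *
    (Complex.exp (-p.2) * (p.2 : ℂ) ^ (s + w p.1 - 1)) with hF
  have hmeas : AEStronglyMeasurable F ((volume : Measure ℝ).prod μ) := by
    apply Measurable.aestronglyMeasurable
    simp only [hF]
    fun_prop
  have hFint : Integrable F ((volume : Measure ℝ).prod μ) := by
    have hg : Integrable (fun y : ℝ => A ^ (-η) * (Real.exp (-y) * y ^ (s.re + η - 1))) μ :=
      (Real.GammaIntegral_convergent (by linarith : 0 < s.re + η)).const_mul _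
    refine (hCint.norm.mul_prod hg).mono' hmeas ?_
    have : ∀ᵐ p ∂((volume : Measure ℝ).prod μ), 0 < p.2 :=
      Measure.quasiMeasurePreserving_snd.ae (ae_restrict_mem measurableSet_Ioi)
    filter_upwards [this] with p hp
    simp only [hF, norm_mul]
    rw [Complex.norm_cpow_eq_rpow_re_of_pos hp, Complex.norm_cpow_eq_rpow_re_of_pos hA,
      Complex.norm_exp]
    simp [hwre, mul_assoc]
  have hinner : ∀ t, ∫ y, F (t, y) ∂μ = Complex.Gamma (s + w t) /
      Complex.cos ((Real.pi : ℂ) * w t / 2) * (A : ℂ) ^ (-w t) := by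
    intro t
    simp only [hF]
    rw [integral_const_mul, Complex.Gamma_eq_integral (by simp [hwre]; linarith),
      Complex.GammaIntegral]
    simp only [Complex.ofReal_exp, Complex.ofReal_neg, hC]
    ring
  have houter : ∀ y : ℝ, 0 < y → ∫ t, F (t, y) =
      4 * ((y : ℂ) ^ s * (Complex.exp (-y) * (A / ((y : ℂ) ^ 2 + (A : ℂ) ^ 2)))) := by
    intro y hy
    have hy' : (y : ℂ) ≠ 0 := by exact_mod_cast hy.ne'
    have e : ∀ t, F (t, y) = (y : ℂ) ^ (s - 1) * Complex.exp (-y) *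
        (((A / y : ℝ) : ℂ) ^ (-w t) * C t) := by
      intro t
      simp only [hF]
      rw [div_eq_mul_inv, Complex.ofReal_mul, Complex.mul_cpow_ofReal_nonneg hA.le (by positivity),
        Complex.ofReal_inv, Complex.inv_cpow _ _ (by
        rw [Complex.arg_ofReal_of_nonneg hy.le]; exact Real.pi_pos.ne), Complex.cpow_neg (y : ℂ),
        inv_inv, show s + w t - 1 = (s - 1) + w t by ring, Complex.cpow_add _ _ hy']
      ring
    simp_rw [e]
    rw [integral_const_mul, inverse_mellin_inv_cos hη0 hη1 (div_pos hA hy),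
      Complex.cpow_sub _ _ hy', Complex.cpow_one]
    have n3 : ((y : ℂ) ^ 2 + (A : ℂ) ^ 2) ≠ 0 := by
      exact_mod_cast (by positivity : y ^ 2 + A ^ 2 ≠ 0)
    have n4 : (1 + ((A / y : ℝ) : ℂ) ^ 2) = ((y : ℂ) ^ 2 + (A : ℂ) ^ 2) / y ^ 2 := by
      push_cast; field_simp
    rw [n4]
    push_cast
    field_simp
  constructor
  · exact hFint.integral_prod_left.congr (ae_of_all _ hinner)
  · calc _ = ∫ t, ∫ y, F (t, y) ∂μ := integral_congr_ae (ae_of_all _ fun t => (hinner t).symm)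
      _ = ∫ y, (∫ t, F (t, y)) ∂μ := integral_integral_swap hFint
      _ = _ := by
          rw [← integral_const_mul]
          exact setIntegral_congr_fun measurableSet_Ioi (fun y hy => houter y hy)

theorem line_integral_eq_sin_integral (s : ℂ) (hs0 : 0 < s.re) (hs1 : s.re < 1)
    (n : ℕ) (hn : 1 ≤ n) (η : ℝ) (hη0 : 0 < η) (hη1 : η < 1) :
    MeasureTheory.Integrable (fun t : ℝ =>
      Complex.Gamma (s + ((η : ℂ) + (t : ℂ) * Complex.I)) /
        Complex.cos ((Real.pi : ℂ) * ((η : ℂ) + (t : ℂ) * Complex.I) / 2) *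
        ((2 * Real.pi * n : ℝ) : ℂ) ^ (-((η : ℂ) + (t : ℂ) * Complex.I))) ∧
    MeasureTheory.IntegrableOn (fun x : ℝ =>
      (Real.sin (2 * Real.pi * n * x) : ℂ) * (x : ℂ) ^ (-s - 1)) (Set.Ioi 1) ∧
    ((1 / (2 * Real.pi) : ℝ) : ℂ) * ∫ t : ℝ,
        Complex.Gamma (s + ((η : ℂ) + (t : ℂ) * Complex.I)) /
          Complex.cos ((Real.pi : ℂ) * ((η : ℂ) + (t : ℂ) * Complex.I) / 2) *
          ((2 * Real.pi * n : ℝ) : ℂ) ^ (-((η : ℂ) + (t : ℂ) * Complex.I))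
      = 2 / (Real.pi : ℂ) * Complex.Gamma (s + 1) *
          ∫ x in Set.Ioi (1 : ℝ), (Real.sin (2 * Real.pi * n * x) : ℂ) * (x : ℂ) ^ (-s - 1) := by
  have hA : 0 < 2 * Real.pi * n := by
    have : (0 : ℝ) < n := by exact_mod_cast hn
    positivity
  have hexp : Complex.exp (((2 * Real.pi * n : ℝ) : ℂ) * Complex.I) = 1 := by
    rw [← Complex.exp_nat_mul_two_pi_mul_I n]
    push_cast
    ring_nf
  obtain ⟨hI, hL⟩ := line_integral_eq hs0 hA hη0 hη1
  obtain ⟨hJ, hR⟩ := sin_integral_eq hs0 hA hexp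
  refine ⟨hI, hJ, ?_⟩
  rw [hL, mul_assoc (2 / (Real.pi : ℂ)), hR]
  push_cast
  ring
end
end
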